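/- Let R be a commutative ring, m ≥ 1, x_1,…,x_m ∈ R, and ε ∈ {0,1}^m with support S = {i : ε_i = 1}. Let A_ε be the m×m matrix with (i,i) entry x_i(1 − ε_i x_i) and (i,k) entry ε_i x_k for k ≠ i. Then det A_ε = x_1⋯x_m if S = ∅, and det A_ε = x_1⋯x_m · (−1)^{|S|−1} (Σ_{i∈S} Π_{j∈S, j≠i} x_j − Π_{j∈S} x_j) if S ≠ ∅. (A_ε is the coefficient matrix of the linear system arising from the (0,1)-initial forms L_i^B of the Lauricella F_B operators.) -/

import Mathlib

/-! Pulling the factor `x_k` out of each column leaves a rank-one perturbation of a diagonal matrix: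
`A_ε = (D + u 1ᵀ) diag(x)`, where `u` is the indicator of `S` and `D_ii` is `-x_i` on `S` and `1`
off `S`. The matrix determinant lemma in its adjugate form, valid also when `D` is singular, gives
`det A_ε = (∏ x_i) (∏_{i ∈ S} (-x_i) + ∑_{i ∈ S} ∏_{j ∈ S, j ≠ i} (-x_j))`. -/

/-- The matrix `A_ε` of the linear system coming from the `(0,1)`-initial forms `L_i^B`
of Lauricella's `F_B` system: the `(i,i)` entry is `x_i(1 − ε_i x_i)` and the `(i,k)`
entry for `k ≠ i` is `ε_i x_k`, where `ε ∈ {0,1}^m`. -/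
def AMat {R : Type*} [CommRing R] {m : ℕ} (x : Fin m → R) (ε : Fin m → Bool) :
    Matrix (Fin m) (Fin m) R :=
  Matrix.of fun i j =>
    if i = j then x i * (1 - (if ε i then x i else 0)) else (if ε i then x j else 0)

section RankOne

open Matrix

variable {R n : Type*} [CommRing R] [Fintype n] [DecidableEq n]

theorem det_add_vecMulVec_single (A : Matrix n n R) (k : n) (a : R) (v : n → R) :
    (A + vecMulVec (Pi.single k a) v).det = A.det + a * (A.updateRow k v).det := by
  have h_row : A + vecMulVec (Pi.single k a) v = A.updateRow k (A k + a • v) := by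
    ext i j
    obtain rfl | hik := eq_or_ne i k
    · simp [vecMulVec_apply]
    · simp [vecMulVec_apply, hik]
  rw [h_row, det_updateRow_add, updateRow_eq_self, det_updateRow_smul]

theorem det_updateRow_add_vecMulVec (A : Matrix n n R) (k : n) (u v : n → R) :
    ((A + vecMulVec u v).updateRow k v).det = (A.updateRow k v).det := by
  -- Every other row differs from that of `A` by a multiple of row `k`, which is `v` itself.
  refine det_eq_of_forall_row_eq_smul_add_const (Function.update u k 0) k (by simp) fun i j => ?_
  obtain rfl | hik := eq_or_ne i k
  · simp
  · simp [hik, vecMulVec_apply]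

theorem det_add_vecMulVec_eq_sum_det_updateRow (A : Matrix n n R) (u v : n → R) :
    (A + vecMulVec u v).det = A.det + ∑ i, u i * (A.updateRow i v).det := by
  suffices h : ∀ s : Finset n, (A + vecMulVec (∑ i ∈ s, Pi.single i (u i)) v).det =
      A.det + ∑ i ∈ s, u i * (A.updateRow i v).det by
    simpa only [Finset.univ_sum_single] using h Finset.univ
  intro s
  induction s using Finset.induction_on with
  | empty => simp
  | insert k s hk ih =>
    rw [Finset.sum_insert hk, Finset.sum_insert hk, add_comm (Pi.single k (u k) : n → R),
      add_vecMulVec, ← add_assoc, det_add_vecMulVec_single, det_updateRow_add_vecMulVec, ih]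
    ring

theorem det_add_vecMulVec (A : Matrix n n R) (u v : n → R) :
    (A + vecMulVec u v).det = A.det + u ⬝ᵥ v ᵥ* A.adjugate := by
  simp only [det_add_vecMulVec_eq_sum_det_updateRow, dotProduct, ← cramer_transpose_apply,
    cramer_eq_adjugate_mulVec, ← adjugate_transpose, mulVec_transpose]

theorem det_diagonal_add_vecMulVec (d u v : n → R) :
    (diagonal d + vecMulVec u v).det =
      ∏ i, d i + ∑ i, u i * (v i * ∏ j ∈ Finset.univ.erase i, d j) := by
  simp only [det_add_vecMulVec, det_diagonal, adjugate_diagonal, dotProduct, vecMul_diagonal]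

end RankOne

theorem prod_neg_add_sum_prod_erase_neg {R ι : Type*} [CommRing R] [DecidableEq ι]
    {s : Finset ι} (hs : s.Nonempty) (f : ι → R) :
    ∏ i ∈ s, -f i + ∑ i ∈ s, ∏ j ∈ s.erase i, -f j =
      (-1) ^ (s.card - 1) * (∑ i ∈ s, ∏ j ∈ s.erase i, f j - ∏ i ∈ s, f i) := by
  have h_sum : ∑ i ∈ s, ∏ j ∈ s.erase i, -f j =
      (-1) ^ (s.card - 1) * ∑ i ∈ s, ∏ j ∈ s.erase i, f j := by
    rw [Finset.mul_sum]
    refine Finset.sum_congr rfl fun i hi => ?_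
    rw [Finset.prod_neg, Finset.card_erase_of_mem hi]
  have h_sign : (-1 : R) ^ s.card = -(-1) ^ (s.card - 1) := by
    rw [← mul_pow_sub_one hs.card_ne_zero, neg_one_mul]
  rw [Finset.prod_neg, h_sum, h_sign]
  ring

namespace AMat

variable {R : Type*} [CommRing R] {m : ℕ} (x : Fin m → R) (ε : Fin m → Bool)

theorem eq_diagonal_add_vecMulVec_mul_diagonal :
    AMat x ε = (Matrix.diagonal (fun i => if ε i then -x i else 1) +
      Matrix.vecMulVec (fun i => if ε i then 1 else 0) 1) * Matrix.diagonal x := by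
  ext i k
  obtain rfl | hik := eq_or_ne i k
  · cases hε : ε i
    · simp [AMat, hε]
    · simp [AMat, hε]
      ring
  · simp [AMat, hik]

theorem det_eq_prod_mul_prod_neg_add_sum {S : Finset (Fin m)} (hS : ∀ i, i ∈ S ↔ ε i) :
    (AMat x ε).det =
      (∏ i, x i) * (∏ i ∈ S, -x i + ∑ i ∈ S, ∏ j ∈ S.erase i, -x j) := by
  rw [eq_diagonal_add_vecMulVec_mul_diagonal, Matrix.det_mul, Matrix.det_diagonal, mul_comm,
    det_diagonal_add_vecMulVec]
  simp only [← hS, Pi.one_apply, one_mul, ite_mul, zero_mul, Finset.sum_ite_mem,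
    Finset.prod_ite_mem, Finset.univ_inter, Finset.erase_inter]

end AMat

/-- With `S = {i : ε_i = 1}`, the determinant of `A_ε` is `x_1⋯x_m` when `S = ∅`, and
`x_1⋯x_m ⋅ (−1)^{|S|−1} (Σ_{i∈S} Π_{j∈S, j≠i} x_j − Π_{j∈S} x_j)` when `S ≠ ∅`. -/
theorem AMat_det {R : Type*} [CommRing R] (m : ℕ) (hm : 1 ≤ m) (x : Fin m → R)
    (ε : Fin m → Bool) (S : Finset (Fin m))
    (hS : S = Finset.univ.filter (fun i => ε i = true)) :
    (S = ∅ → (AMat x ε).det = ∏ i, x i) ∧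
      (S.Nonempty → (AMat x ε).det =
        (∏ i, x i) * ((-1 : R) ^ (S.card - 1) *
          ((∑ i ∈ S, ∏ j ∈ S.erase i, x j) - ∏ j ∈ S, x j))) := by
  have h_det := AMat.det_eq_prod_mul_prod_neg_add_sum x ε (S := S) (by simp [hS])
  refine ⟨fun h_empty => ?_, fun h_nonempty => ?_⟩
  · simpa [h_empty] using h_det
  · rw [h_det, prod_neg_add_sum_prod_erase_neg h_nonempty]
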